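/- (Performance Difference Lemma, visitation form.) For any two policies π and π̃ of a finite Markov decision process with discount factor γ ∈ [0,1), η(π̃) − η(π) = (1/(1−γ)) Σ_s ρ_{π̃}(s) Σ_a π̃(a|s) A^π(s,a), where ρ_{π̃} is the discounted state visitation frequency of π̃. -/

import Mathlib

open Finset

noncomputable section

/-- Action-value function `Q^π(s,a) = r(s,a) + γ ∑_{s'} P(s'|s,a) V(s')`
(built from a given value function `V`). -/
def mdpQ {S A : Type*} [Fintype S] (P : S → A → S → ℝ) (r : S → A → ℝ) (γ : ℝ)
    (V : S → ℝ) (s : S) (a : A) : ℝ :=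
  r s a + γ * ∑ s', P s a s' * V s'

/-- Advantage function `A^π(s,a) = Q^π(s,a) − V^π(s)`. -/
def mdpAdv {S A : Type*} [Fintype S] (P : S → A → S → ℝ) (r : S → A → ℝ) (γ : ℝ)
    (V : S → ℝ) (s : S) (a : A) : ℝ :=
  mdpQ P r γ V s a - V s

/-- `V` solves the Bellman equation for policy `π`. -/
def IsBellman {S A : Type*} [Fintype S] [Fintype A] (P : S → A → S → ℝ)
    (r : S → A → ℝ) (γ : ℝ) (π : S → A → ℝ) (V : S → ℝ) : Prop :=
  ∀ s, V s = ∑ a, π s a * (r s a + γ * ∑ s', P s a s' * V s')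

/-- Policy performance `η(π) = ∑_s ρ₀(s) V^π(s)`. -/
def perf {S : Type*} [Fintype S] (ρ₀ V : S → ℝ) : ℝ := ∑ s, ρ₀ s * V s

/-- Time-`t` state distribution `μ_t^π`. -/
def stateDist {S A : Type*} [Fintype S] [Fintype A] (P : S → A → S → ℝ)
    (π : S → A → ℝ) (ρ₀ : S → ℝ) : ℕ → S → ℝ
  | 0 => ρ₀
  | t + 1 => fun s' => ∑ s, ∑ a, stateDist P π ρ₀ t s * π s a * P s a s'

/-- Discounted state visitation frequency `ρ_π(s) = (1−γ) ∑_t γ^t μ_t^π(s)`. -/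
def visitFreq {S A : Type*} [Fintype S] [Fintype A] (P : S → A → S → ℝ)
    (π : S → A → ℝ) (ρ₀ : S → ℝ) (γ : ℝ) (s : S) : ℝ :=
  (1 - γ) * ∑' t : ℕ, γ ^ t * stateDist P π ρ₀ t s

/-- Surrogate objective `L_π(π̃)`, built from the value function `V` of `π`. -/
def surrogate {S A : Type*} [Fintype S] [Fintype A] (P : S → A → S → ℝ)
    (r : S → A → ℝ) (γ : ℝ) (ρ₀ : S → ℝ) (π : S → A → ℝ) (V : S → ℝ)
    (π' : S → A → ℝ) : ℝ :=
  perf ρ₀ V +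
    (1 / (1 - γ)) * ∑ s, visitFreq P π ρ₀ γ s * ∑ a, π' s a * mdpAdv P r γ V s a

/-- Total variation distance between pmfs on a finite set. -/
def dTV {X : Type*} [Fintype X] (p q : X → ℝ) : ℝ := (1 / 2) * ∑ x, |p x - q x|

/-- `D_TV^max(π,π̃) = max_s D_TV(π(·|s) ‖ π̃(·|s))`. -/
def dTVmax {S A : Type*} [Fintype S] [Fintype A] (π π' : S → A → ℝ) : ℝ :=
  ⨆ s : S, dTV (π s) (π' s)

/-! Let `M` be the state transition matrix of `π̃`, `D = V^π̃ - V^π` and `ρ` the visitation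
frequency of `π̃`. Averaging the advantage over `π̃` and subtracting the Bellman equation of `π̃`
gives `∑ a, π̃(a|s) A^π(s,a) = (D - γ M D)(s)`, while shifting the series defining `ρ` by one time
step gives the flow equation `ρ - γ ρ M = (1 - γ) ρ₀`. Pairing the two yields
`⟨ρ, D - γ M D⟩ = ⟨ρ - γ ρ M, D⟩ = (1 - γ) ⟨ρ₀, D⟩`. -/

open Matrix

theorem sum_abs_vecMul_le {m n : Type*} [Fintype m] [Fintype n] {M : Matrix m n ℝ} {c : ℝ}
    (hM : ∀ i, ∑ j, |M i j| ≤ c) (v : m → ℝ) :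
    ∑ j, |(v ᵥ* M) j| ≤ c * ∑ i, |v i| :=
  calc ∑ j, |(v ᵥ* M) j|
      ≤ ∑ j, ∑ i, |v i| * |M i j| :=
        sum_le_sum fun j _ => (abs_sum_le_sum_abs _ _).trans_eq (by simp only [abs_mul])
    _ = ∑ i, |v i| * ∑ j, |M i j| := by
        rw [sum_comm]
        simp only [mul_sum]
    _ ≤ ∑ i, |v i| * c :=
        sum_le_sum fun i _ => mul_le_mul_of_nonneg_left (hM i) (abs_nonneg _)
    _ = c * ∑ i, |v i| := by rw [← sum_mul, mul_comm]

section PolicyMatrix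

variable {S A : Type*} [Fintype A]

/-- The state transition matrix of the Markov chain induced by the policy `π`, with entries
`∑ a, π(a|s) P(s'|s,a)`. Rows are indexed by the current state, so that distributions evolve by
`vecMul` and value functions are averaged by `mulVec`. -/
def policyMatrix (P : S → A → S → ℝ) (π : S → A → ℝ) : Matrix S S ℝ :=
  of fun s => π s ᵥ* of (P s)

variable [Fintype S] {P : S → A → S → ℝ} {r : S → A → ℝ} {γ : ℝ} {ρ₀ : S → ℝ} {π : S → A → ℝ}

theorem policyMatrix_mulVec (V : S → ℝ) (s : S) :
    (policyMatrix P π *ᵥ V) s = ∑ a, π s a * ∑ s', P s a s' * V s' :=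
  (dotProduct_mulVec (π s) (of (P s)) V).symm

theorem sum_abs_policyMatrix_le_one {s : S} (hP : ∀ a, ∑ s', |P s a s'| ≤ 1)
    (hπ : ∑ a, |π s a| ≤ 1) : ∑ s', |policyMatrix P π s s'| ≤ 1 :=
  calc ∑ s', |policyMatrix P π s s'|
      ≤ 1 * ∑ a, |π s a| := sum_abs_vecMul_le (M := of (P s)) hP (π s)
    _ ≤ 1 := by simpa only [one_mul] using hπ

theorem stateDist_succ (t : ℕ) :
    stateDist P π ρ₀ (t + 1) = stateDist P π ρ₀ t ᵥ* policyMatrix P π := by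
  ext s'
  simp only [stateDist, policyMatrix, vecMul, dotProduct, of_apply, mul_sum, mul_assoc]

theorem sum_abs_stateDist_le (hP : ∀ s a, ∑ s', |P s a s'| ≤ 1)
    (hπ : ∀ s, ∑ a, |π s a| ≤ 1) (t : ℕ) :
    ∑ s, |stateDist P π ρ₀ t s| ≤ ∑ s, |ρ₀ s| := by
  induction t with
  | zero => exact le_rfl
  | succ t ih =>
    rw [stateDist_succ]
    calc ∑ s, |(stateDist P π ρ₀ t ᵥ* policyMatrix P π) s|
        ≤ 1 * ∑ s, |stateDist P π ρ₀ t s| :=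
          sum_abs_vecMul_le (fun s => sum_abs_policyMatrix_le_one (hP s) (hπ s)) _
      _ ≤ ∑ s, |ρ₀ s| := by rwa [one_mul]

theorem summable_pow_mul_stateDist (hP : ∀ s a, ∑ s', |P s a s'| ≤ 1)
    (hπ : ∀ s, ∑ a, |π s a| ≤ 1) (hγ : |γ| < 1) (s : S) :
    Summable fun t : ℕ => γ ^ t * stateDist P π ρ₀ t s := by
  have geometric : Summable fun t : ℕ => |γ| ^ t * ∑ s, |ρ₀ s| :=
    (summable_geometric_of_lt_one (abs_nonneg γ) hγ).mul_right _
  refine geometric.of_norm_bounded fun t => ?_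
  have entry_le : |stateDist P π ρ₀ t s| ≤ ∑ s, |ρ₀ s| :=
    (single_le_sum (fun s _ => abs_nonneg (stateDist P π ρ₀ t s)) (mem_univ s)).trans
      (sum_abs_stateDist_le hP hπ t)
  rw [Real.norm_eq_abs, abs_mul, abs_pow]
  gcongr

theorem visitFreq_sub_smul_vecMul_policyMatrix
    (hsum : ∀ s, Summable fun t : ℕ => γ ^ t * stateDist P π ρ₀ t s) :
    visitFreq P π ρ₀ γ - γ • (visitFreq P π ρ₀ γ ᵥ* policyMatrix P π) = (1 - γ) • ρ₀ := by
  ext s'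
  have shifted : ∑' t : ℕ, γ ^ (t + 1) * stateDist P π ρ₀ (t + 1) s' =
      γ * ∑ s, (∑' t : ℕ, γ ^ t * stateDist P π ρ₀ t s) * policyMatrix P π s s' := by
    simp only [← tsum_mul_right]
    rw [← Summable.tsum_finsetSum fun s _ => (hsum s).mul_right _, ← tsum_mul_left]
    simp only [stateDist_succ, vecMul, dotProduct, pow_succ', mul_assoc, mul_sum]
  have unrolled : ∑' t : ℕ, γ ^ t * stateDist P π ρ₀ t s' = ρ₀ s' +
      γ * ∑ s, (∑' t : ℕ, γ ^ t * stateDist P π ρ₀ t s) * policyMatrix P π s s' := by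
    rw [(hsum s').tsum_eq_zero_add, shifted, pow_zero, one_mul, stateDist]
  simp only [Pi.sub_apply, Pi.smul_apply, smul_eq_mul, vecMul, dotProduct, visitFreq, mul_assoc,
    ← mul_sum]
  linear_combination (1 - γ) * unrolled

theorem sum_mul_mdpAdv {s : S} (hπ : ∑ a, π s a = 1) (V : S → ℝ) :
    ∑ a, π s a * mdpAdv P r γ V s a = ∑ a, π s a * mdpQ P r γ V s a - V s := by
  simp only [mdpAdv, mul_sub, sum_sub_distrib, ← sum_mul, hπ, one_mul]

theorem sum_mul_mdpQ (V : S → ℝ) (s : S) :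
    ∑ a, π s a * mdpQ P r γ V s a = ∑ a, π s a * r s a + γ * (policyMatrix P π *ᵥ V) s := by
  simp only [mdpQ, policyMatrix_mulVec, mul_add, sum_add_distrib, mul_sum, mul_left_comm]

theorem IsBellman.sum_mul_mdpAdv_eq_sub_smul_mulVec {W : S → ℝ} (hW : IsBellman P r γ π W)
    (hπ : ∀ s, ∑ a, π s a = 1) (V : S → ℝ) :
    (fun s => ∑ a, π s a * mdpAdv P r γ V s a) =
      (W - V) - γ • (policyMatrix P π *ᵥ (W - V)) := by
  ext s
  have bellman : W s = ∑ a, π s a * r s a + γ * (policyMatrix P π *ᵥ W) s :=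
    (hW s).trans (sum_mul_mdpQ W s)
  rw [sum_mul_mdpAdv (hπ s), sum_mul_mdpQ, mulVec_sub]
  simp only [Pi.sub_apply, Pi.smul_apply, smul_eq_mul]
  linear_combination -bellman

end PolicyMatrix

theorem perf_sub {S : Type*} [Fintype S] (ρ₀ V W : S → ℝ) :
    perf ρ₀ W - perf ρ₀ V = ρ₀ ⬝ᵥ (W - V) :=
  (dotProduct_sub ρ₀ W V).symm

theorem performance_difference_visitation_general
    {S A : Type*} [Fintype S] [Fintype A]
    (P : S → A → S → ℝ) (r : S → A → ℝ) (γ : ℝ) (ρ₀ : S → ℝ)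
    (hP : ∀ s a, ∑ s', |P s a s'| ≤ 1) (hγ : |γ| < 1)
    (π : S → A → ℝ) (hπ0 : ∀ s a, 0 ≤ π s a) (hπ1 : ∀ s, ∑ a, π s a = 1)
    (V W : S → ℝ) (hW : IsBellman P r γ π W) :
    perf ρ₀ W - perf ρ₀ V =
      (1 / (1 - γ)) *
        ∑ s, visitFreq P π ρ₀ γ s * ∑ a, π s a * mdpAdv P r γ V s a := by
  have hπ_abs : ∀ s, ∑ a, |π s a| ≤ 1 := fun s => by
    simp only [abs_of_nonneg (hπ0 s _), hπ1, le_rfl]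
  have hγ_ne : 1 - γ ≠ 0 := (sub_pos.2 (lt_of_abs_lt hγ)).ne'
  have flow : visitFreq P π ρ₀ γ - γ • (visitFreq P π ρ₀ γ ᵥ* policyMatrix P π) = (1 - γ) • ρ₀ :=
    visitFreq_sub_smul_vecMul_policyMatrix (summable_pow_mul_stateDist hP hπ_abs hγ)
  have pairing : visitFreq P π ρ₀ γ ⬝ᵥ (fun s => ∑ a, π s a * mdpAdv P r γ V s a) =
      (1 - γ) * (ρ₀ ⬝ᵥ (W - V)) := by
    rw [hW.sum_mul_mdpAdv_eq_sub_smul_mulVec hπ1, dotProduct_sub, dotProduct_smul,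
      dotProduct_mulVec, ← smul_dotProduct, ← sub_dotProduct, flow, smul_dotProduct, smul_eq_mul]
  change _ = 1 / (1 - γ) * (visitFreq P π ρ₀ γ ⬝ᵥ fun s => ∑ a, π s a * mdpAdv P r γ V s a)
  rw [pairing, perf_sub, ← mul_assoc, one_div_mul_cancel hγ_ne, one_mul]

/-- Performance Difference Lemma, visitation form: for any two
policies `π` and `π̃`,
`η(π̃) − η(π) = (1/(1−γ)) ∑_s ρ_{π̃}(s) ∑_a π̃(a|s) A^π(s,a)`. -/
theorem performance_difference_visitation
    {S A : Type*} [Fintype S] [Fintype A] [Nonempty S] [Nonempty A]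
    (P : S → A → S → ℝ) (r : S → A → ℝ) (γ : ℝ) (ρ₀ : S → ℝ)
    (hP0 : ∀ s a s', 0 ≤ P s a s') (hP1 : ∀ s a, ∑ s', P s a s' = 1)
    (hγ0 : 0 ≤ γ) (hγ1 : γ < 1)
    (hρ0 : ∀ s, 0 ≤ ρ₀ s) (hρ1 : ∑ s, ρ₀ s = 1)
    (π πt : S → A → ℝ)
    (hπ0 : ∀ s a, 0 ≤ π s a) (hπ1 : ∀ s, ∑ a, π s a = 1)
    (hπt0 : ∀ s a, 0 ≤ πt s a) (hπt1 : ∀ s, ∑ a, πt s a = 1)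
    (V Vt : S → ℝ)
    (hV : IsBellman P r γ π V) (hVt : IsBellman P r γ πt Vt) :
    perf ρ₀ Vt - perf ρ₀ V =
      (1 / (1 - γ)) *
        ∑ s, visitFreq P πt ρ₀ γ s * ∑ a, πt s a * mdpAdv P r γ V s a := by
  exact performance_difference_visitation_general P r γ ρ₀ (by simp [abs_of_nonneg, hP0, hP1])
    (by rwa [abs_of_nonneg hγ0]) πt hπt0 hπt1 V Vt hVt
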